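/- Let f(z) = z + exp(−z) and write z = x + iy. Then: (i) if x ≥ 0 and 0 < y ≤ π then Im f(z) > 0, and if x ≥ 0 and −π ≤ y < 0 then Im f(z) < 0 (points in the right half of the strip do not change half-strip); (ii) if x ≤ −1 and 0 < y < π/2 then Im f(z) < 0, and if x ≤ −1 and −π/2 < y < 0 then Im f(z) > 0 (such points change half-strip); (iii) if π/2 < |y| ≤ π then Re f(z) < Re z, and moreover if π/2 < y < π then Im f(z) < y, while if −π < y < −π/2 then Im f(z) > y. -/

import Mathlib

/-!
Writing `z = x + iy`, one has `Re f(z) = x + e^{-x} cos y` and `Im f(z) = y - e^{-x} sin y`.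
Part (i) is `e^{-x} sin y < y`, which follows from `e^{-x} ≤ 1`, `sin y ≥ 0` and `sin y < y`.
Part (ii) is `y < e^{-x} sin y`, which follows from Jordan's inequality `(2/π) y < sin y` together
with `e^{-x} ≥ 1 - x ≥ 2 > π/2`. Part (iii) is the sign of `cos` and `sin` on the relevant
intervals. In (i) and (ii) the claims for `y < 0` reduce to those for `-y`
because `sin` is odd.
-/

open Complex Filter Topology Set

noncomputable def f : ℂ → ℂ := fun z => z + Complex.exp (-z)

theorem f_re (z : ℂ) : (f z).re = z.re + Real.exp (-z.re) * Real.cos z.im := by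
  simp [f, Complex.exp_re]

theorem f_im (z : ℂ) : (f z).im = z.im - Real.exp (-z.re) * Real.sin z.im := by
  simp [f, Complex.exp_im, sub_eq_add_neg]

theorem exp_mul_sin_lt {x y : ℝ} (hx : 0 ≤ x) (hy : 0 < y) (hyπ : y ≤ Real.pi) :
    Real.exp (-x) * Real.sin y < y :=
  calc Real.exp (-x) * Real.sin y ≤ 1 * Real.sin y :=
        mul_le_mul_of_nonneg_right (Real.exp_le_one_iff.mpr (by linarith))
          (Real.sin_nonneg_of_nonneg_of_le_pi hy.le hyπ)
    _ = Real.sin y := one_mul _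
    _ < y := Real.sin_lt hy

theorem lt_exp_mul_sin {x y : ℝ} (hx : x ≤ -1) (hy : 0 < y) (hyπ : y < Real.pi / 2) :
    y < Real.exp (-x) * Real.sin y := by
  have hexp : 2 ≤ Real.exp (-x) := by linarith [Real.add_one_le_exp (-x)]
  have hsin : 2 / Real.pi * y < Real.sin y := Real.mul_lt_sin hy hyπ
  have hcoef : 1 / 2 < 2 / Real.pi := by
    rw [div_lt_div_iff₀ two_pos Real.pi_pos]
    linarith [Real.pi_lt_four]
  have hhalf : y / 2 < Real.sin y := by
    linarith [mul_lt_mul_of_pos_right hcoef hy]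
  linarith [mul_le_mul_of_nonneg_right hexp (show 0 ≤ Real.sin y by linarith)]

/-- elementary mapping properties of `f` on the strip `S`:
(i) points in the right half of the strip stay in their half-strip;
(ii) points far to the left near the real axis change half-strip;
(iii) points with `π/2 < |Im z| ≤ π` move to the left and their imaginary part moves
towards the real axis. -/
theorem strip_mapping_properties (z : ℂ) :
    ((0 ≤ z.re → 0 < z.im → z.im ≤ Real.pi → 0 < (f z).im) ∧
     (0 ≤ z.re → -Real.pi ≤ z.im → z.im < 0 → (f z).im < 0)) ∧
    ((z.re ≤ -1 → 0 < z.im → z.im < Real.pi / 2 → (f z).im < 0) ∧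
     (z.re ≤ -1 → -(Real.pi / 2) < z.im → z.im < 0 → 0 < (f z).im)) ∧
    ((Real.pi / 2 < |z.im| → |z.im| ≤ Real.pi → (f z).re < z.re) ∧
     (Real.pi / 2 < z.im → z.im < Real.pi → (f z).im < z.im) ∧
     (-Real.pi < z.im → z.im < -(Real.pi / 2) → z.im < (f z).im)) := by
  have hE : 0 < Real.exp (-z.re) := Real.exp_pos _
  rw [f_re, f_im]
  refine ⟨⟨fun hx hy hyπ => ?_, fun hx hyπ hy => ?_⟩,
    ⟨fun hx hy hyπ => ?_, fun hx hyπ hy => ?_⟩, fun h1 h2 => ?_, fun h1 h2 => ?_, fun h1 h2 => ?_⟩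
  · linarith [exp_mul_sin_lt hx hy hyπ]
  · have h := exp_mul_sin_lt hx (y := -z.im) (by linarith) (by linarith)
    rw [Real.sin_neg] at h
    linarith
  · linarith [lt_exp_mul_sin hx hy hyπ]
  · have h := lt_exp_mul_sin hx (y := -z.im) (by linarith) (by linarith)
    rw [Real.sin_neg] at h
    linarith
  · have hcos : Real.cos z.im < 0 := by
      rw [← Real.cos_abs]
      exact Real.cos_neg_of_pi_div_two_lt_of_lt h1 (by linarith [Real.pi_pos])
    linarith [mul_neg_of_pos_of_neg hE hcos]
  · have hsin : 0 < Real.sin z.im :=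
      Real.sin_pos_of_pos_of_lt_pi (by linarith [Real.pi_pos]) h2
    linarith [mul_pos hE hsin]
  · have hsin : Real.sin z.im < 0 :=
      Real.sin_neg_of_neg_of_neg_pi_lt (by linarith [Real.pi_pos]) h1
    linarith [mul_neg_of_pos_of_neg hE hsin]
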